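/- Let G^i be a spray with coefficients N^i_j, let F̃ be a Finsler structure on U with metric tensor g̃_{ij}, and let P : Ω → ℝ be a fixed smooth, positively 1-homogeneous function. Then S(∂F̃²/∂y^i) − ∂F̃²/∂x^i = 2P ∂F̃²/∂y^i holds on Ω for all i if and only if the Levi-Civita equations hold on Ω for all i, j: ∇g̃_{ij} = 2P g̃_{ij} + (∂P/∂y^i) Σ_k g̃_{kj} y^k + (∂P/∂y^j) Σ_k g̃_{ik} y^k, where ∇g̃_{ij} = S(g̃_{ij}) − Σ_k (N^k_i g̃_{kj} + N^k_j g̃_{ik}). -/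

import Mathlib

noncomputable section

/-- A point `(x, y)` of the tangent space coordinates over `ℝⁿ`. -/
abbrev Pt (n : ℕ) : Type := (Fin n → ℝ) × (Fin n → ℝ)

/-- `Ω = U × (ℝⁿ \ {0})`. -/
def OmegaSet {n : ℕ} (U : Set (Fin n → ℝ)) : Set (Pt n) :=
  {p : Pt n | p.1 ∈ U ∧ p.2 ≠ 0}

/-- Partial derivative `∂f/∂x^i`. -/
def pdx {n : ℕ} (f : Pt n → ℝ) (i : Fin n) (p : Pt n) : ℝ :=
  fderiv ℝ f p (Pi.single i 1, 0)

/-- Partial derivative `∂f/∂y^i`. -/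
def pdy {n : ℕ} (f : Pt n → ℝ) (i : Fin n) (p : Pt n) : ℝ :=
  fderiv ℝ f p (0, Pi.single i 1)

/-- Second fibre derivative `∂²f/∂y^i∂y^j`. -/
def pdyy {n : ℕ} (f : Pt n → ℝ) (i j : Fin n) : Pt n → ℝ :=
  pdy (pdy f j) i

/-- The spray vector field applied to a function:
`S(f) = Σ_k (y^k ∂f/∂x^k − 2 G^k ∂f/∂y^k)`. -/
def Sop {n : ℕ} (G : Fin n → Pt n → ℝ) (f : Pt n → ℝ) (p : Pt n) : ℝ :=
  ∑ k, (p.2 k * pdx f k p - 2 * G k p * pdy f k p)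

/-- Connection coefficients `N^i_j = ∂G^i/∂y^j`. -/
def Ncoef {n : ℕ} (G : Fin n → Pt n → ℝ) (i j : Fin n) : Pt n → ℝ :=
  pdy (G i) j

/-- Horizontal derivative `δf/δx^i = ∂f/∂x^i − Σ_j N^j_i ∂f/∂y^j`. -/
def deltax {n : ℕ} (G : Fin n → Pt n → ℝ) (f : Pt n → ℝ) (i : Fin n) (p : Pt n) : ℝ :=
  pdx f i p - ∑ j, Ncoef G j i p * pdy f j p

/-- Dynamical covariant derivative of a `(0,2)` family:
`∇T_{ij} = S(T_{ij}) − Σ_k (N^k_i T_{kj} + N^k_j T_{ik})`. -/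
def nablaT {n : ℕ} (G : Fin n → Pt n → ℝ) (T : Fin n → Fin n → Pt n → ℝ)
    (i j : Fin n) (p : Pt n) : ℝ :=
  Sop G (T i j) p - ∑ k, (Ncoef G k i p * T k j p + Ncoef G k j p * T i k p)

/-- `f` is positively `k`-homogeneous in the fibre variable `y`, on `Ω`. -/
def PosHomog {n : ℕ} (U : Set (Fin n → ℝ)) (k : ℤ) (f : Pt n → ℝ) : Prop :=
  ∀ L : ℝ, 0 < L → ∀ p ∈ OmegaSet U, f (p.1, L • p.2) = L ^ k * f p

/-- A spray: smooth, positively 2-homogeneous coefficients `G^i`. -/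
def IsSpray {n : ℕ} (U : Set (Fin n → ℝ)) (G : Fin n → Pt n → ℝ) : Prop :=
  ∀ i, ContDiffOn ℝ (⊤ : ℕ∞) (G i) (OmegaSet U) ∧ PosHomog U 2 (G i)

/-- Components of the Euler-Lagrange 1-form: `(δ_S f)_i = S(∂f/∂y^i) − ∂f/∂x^i`. -/
def EL {n : ℕ} (G : Fin n → Pt n → ℝ) (f : Pt n → ℝ) (i : Fin n) (p : Pt n) : ℝ :=
  Sop G (pdy f i) p - pdx f i p

/-- The metric tensor `g_{ij} = ½ ∂²(F²)/∂y^i∂y^j` of a Finsler function. -/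
def metricTensor {n : ℕ} (F : Pt n → ℝ) (i j : Fin n) (p : Pt n) : ℝ :=
  (1 / 2) * pdyy (fun q => F q ^ 2) i j p

/-- A Finsler structure on `U`: smooth, positive, positively 1-homogeneous,
with invertible metric tensor at every point of `Ω`. -/
def IsFinsler {n : ℕ} (U : Set (Fin n → ℝ)) (F : Pt n → ℝ) : Prop :=
  ContDiffOn ℝ (⊤ : ℕ∞) F (OmegaSet U) ∧ (∀ p ∈ OmegaSet U, 0 < F p) ∧ PosHomog U 1 F ∧
    ∀ p ∈ OmegaSet U, IsUnit (Matrix.of (fun i j => metricTensor F i j p))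

/-!
Write `E = F̃²` and let `T_i = S(∂E/∂y^i) − ∂E/∂x^i − 2P ∂E/∂y^i` be the defect of the
Euler–Lagrange equations. In `∂T_i/∂y^j + ∂T_j/∂y^i` the mixed derivatives `∂²E/∂x∂y` cancel, and
Euler's relation `Σ_k y^k ∂²E/∂y^k∂y^j = ∂E/∂y^j` identifies this symmetrized derivative with four
times the defect of the Levi-Civita equations. So `T = 0` implies the Levi-Civita equations.
Conversely these make `∂T_i/∂y^j` skew-symmetric. As `T_i` is 2-homogeneous, contracting with `y`
twice gives `Σ_i y^i T_i = 0`, and differentiating this gives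
`0 = T_i + Σ_k y^k ∂T_k/∂y^i = T_i − Σ_k y^k ∂T_i/∂y^k = T_i − 2T_i`.
-/

open Filter Topology

theorem isOpen_omegaSet {n : ℕ} {U : Set (Fin n → ℝ)} (hU : IsOpen U) : IsOpen (OmegaSet U) :=
  hU.prod isOpen_compl_singleton

/-! ### Partial derivatives -/

theorem fderiv_fderiv_apply_comm {V W : Type*} [NormedAddCommGroup V] [NormedSpace ℝ V]
    [NormedAddCommGroup W] [NormedSpace ℝ W] {f : V → W} {x : V} (hf : ContDiffAt ℝ 2 f x)
    (v w : V) :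
    fderiv ℝ (fun z => fderiv ℝ f z v) x w = fderiv ℝ (fun z => fderiv ℝ f z w) x v := by
  have hsymm : IsSymmSndFDerivAt ℝ f x :=
    hf.isSymmSndFDerivAt (by rw [minSmoothness_of_isRCLikeNormedField])
  have hdiff : DifferentiableAt ℝ (fderiv ℝ f) x :=
    (hf.fderiv_right (m := 1) (by norm_num)).differentiableAt one_ne_zero
  rw [fderiv_clm_apply hdiff (differentiableAt_const v),
    fderiv_clm_apply hdiff (differentiableAt_const w)]
  simpa using hsymm w v

section PartialDerivatives

variable {n : ℕ} {f g : Pt n → ℝ} {p : Pt n}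

theorem contDiffAt_pdx {m : WithTop ℕ∞} (hf : ContDiffAt ℝ (m + 1) f p) (i : Fin n) :
    ContDiffAt ℝ m (pdx f i) p :=
  (hf.fderiv_right le_rfl).clm_apply contDiffAt_const

theorem contDiffAt_pdy {m : WithTop ℕ∞} (hf : ContDiffAt ℝ (m + 1) f p) (i : Fin n) :
    ContDiffAt ℝ m (pdy f i) p :=
  (hf.fderiv_right le_rfl).clm_apply contDiffAt_const

theorem differentiableAt_pdx (hf : ContDiffAt ℝ 2 f p) (i : Fin n) :
    DifferentiableAt ℝ (pdx f i) p :=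
  (contDiffAt_pdx (m := 1) hf i).differentiableAt one_ne_zero

theorem differentiableAt_pdy (hf : ContDiffAt ℝ 2 f p) (i : Fin n) :
    DifferentiableAt ℝ (pdy f i) p :=
  (contDiffAt_pdy (m := 1) hf i).differentiableAt one_ne_zero

theorem pdyy_comm (hf : ContDiffAt ℝ 2 f p) (i j : Fin n) : pdyy f i j p = pdyy f j i p :=
  fderiv_fderiv_apply_comm hf _ _

theorem pdy_pdx_comm (hf : ContDiffAt ℝ 2 f p) (i j : Fin n) :
    pdy (pdx f i) j p = pdx (pdy f j) i p :=
  fderiv_fderiv_apply_comm hf _ _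

theorem pdy_congr (hfg : f =ᶠ[𝓝 p] g) (i : Fin n) : pdy f i p = pdy g i p := by
  rw [pdy, pdy, hfg.fderiv_eq]

theorem pdy_sub (hf : DifferentiableAt ℝ f p) (hg : DifferentiableAt ℝ g p) (i : Fin n) :
    pdy (fun q => f q - g q) i p = pdy f i p - pdy g i p := by
  simp [pdy, fderiv_fun_sub hf hg]

theorem pdy_mul (hf : DifferentiableAt ℝ f p) (hg : DifferentiableAt ℝ g p) (i : Fin n) :
    pdy (fun q => f q * g q) i p = f p * pdy g i p + pdy f i p * g p := by
  simp [pdy, fderiv_fun_mul hf hg, mul_comm]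

theorem pdx_const_mul (hf : DifferentiableAt ℝ f p) (c : ℝ) (i : Fin n) :
    pdx (fun q => c * f q) i p = c * pdx f i p := by
  simp [pdx, fderiv_const_mul hf]

theorem pdy_const_mul (hf : DifferentiableAt ℝ f p) (c : ℝ) (i : Fin n) :
    pdy (fun q => c * f q) i p = c * pdy f i p := by
  simp [pdy, fderiv_const_mul hf]

theorem pdy_sum {ι : Type*} {s : Finset ι} {f : ι → Pt n → ℝ}
    (hf : ∀ k ∈ s, DifferentiableAt ℝ (f k) p) (i : Fin n) :
    pdy (fun q => ∑ k ∈ s, f k q) i p = ∑ k ∈ s, pdy (f k) i p := by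
  simp [pdy, fderiv_fun_sum hf]

theorem differentiableAt_snd_apply (k : Fin n) : DifferentiableAt ℝ (fun q : Pt n => q.2 k) p := by
  fun_prop

theorem pdy_snd_apply (k i : Fin n) :
    pdy (fun q : Pt n => q.2 k) i p = if k = i then 1 else 0 := by
  have hproj : HasFDerivAt (fun q : Pt n => q.2 k)
      ((ContinuousLinearMap.proj k).comp (ContinuousLinearMap.snd ℝ (Fin n → ℝ) (Fin n → ℝ))) p :=
    HasFDerivAt.comp p (hasFDerivAt_apply (𝕜 := ℝ) k p.2) hasFDerivAt_snd
  simp [pdy, hproj.fderiv, Pi.single_apply]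

theorem pdy_sum_snd_mul {T : Fin n → Pt n → ℝ} (hT : ∀ k, DifferentiableAt ℝ (T k) p)
    (i : Fin n) :
    pdy (fun q => ∑ k, q.2 k * T k q) i p = T i p + ∑ k, p.2 k * pdy (T k) i p := by
  rw [pdy_sum fun k _ => (differentiableAt_snd_apply k).fun_mul (hT k)]
  simp [pdy_mul (differentiableAt_snd_apply _) (hT _), pdy_snd_apply, Finset.sum_add_distrib,
    add_comm]

theorem fderiv_zero_prod_apply (f : Pt n → ℝ) (p : Pt n) (v : Fin n → ℝ) :
    fderiv ℝ f p (0, v) = ∑ k, v k * pdy f k p := by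
  have hv : ((0, v) : Pt n) = ∑ k, v k • ((0, Pi.single k 1) : Pt n) := by
    ext i
    · simp [Prod.fst_sum]
    · simp [Prod.snd_sum, Pi.single_apply]
  simp only [hv, map_sum, map_smul, smul_eq_mul, pdy]

end PartialDerivatives

/-! ### Positively homogeneous functions -/

section Homogeneity

variable {n : ℕ} {U : Set (Fin n → ℝ)} {k l : ℤ} {f g : Pt n → ℝ}

theorem posHomog_snd_apply (i : Fin n) : PosHomog U 1 (fun q : Pt n => q.2 i) :=
  fun L _ _ _ => by simp

protected theorem PosHomog.sub (hf : PosHomog U k f) (hg : PosHomog U k g) :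
    PosHomog U k (fun q => f q - g q) :=
  fun L hL p hp => by simp only [hf L hL p hp, hg L hL p hp, mul_sub]

protected theorem PosHomog.const_mul (hf : PosHomog U k f) (c : ℝ) :
    PosHomog U k (fun q => c * f q) :=
  fun L hL p hp => by simp only [hf L hL p hp, mul_left_comm]

protected theorem PosHomog.mul {m : ℤ} (hf : PosHomog U k f) (hg : PosHomog U l g)
    (hm : k + l = m) : PosHomog U m (fun q => f q * g q) :=
  fun L hL p hp => by
    simp only [hf L hL p hp, hg L hL p hp, ← hm, zpow_add₀ hL.ne', mul_mul_mul_comm]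

protected theorem PosHomog.sq (hf : PosHomog U k f) : PosHomog U (2 * k) (fun q => f q ^ 2) := by
  simpa only [sq] using hf.mul hf (two_mul k).symm

protected theorem PosHomog.sum {ι : Type*} {s : Finset ι} {f : ι → Pt n → ℝ}
    (hf : ∀ i ∈ s, PosHomog U k (f i)) : PosHomog U k (fun q => ∑ i ∈ s, f i q) :=
  fun L hL p hp => by
    rw [Finset.mul_sum]
    exact Finset.sum_congr rfl fun i hi => hf i hi L hL p hp

theorem PosHomog.fderiv_apply (hU : IsOpen U) (hf : PosHomog U k f) {L : ℝ} (hL : 0 < L)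
    {p : Pt n} (hp : p ∈ OmegaSet U) (v : Pt n) :
    fderiv ℝ f (p.1, L • p.2) (v.1, L • v.2) = L ^ k * fderiv ℝ f p v := by
  let scale : Pt n ≃L[ℝ] Pt n := (ContinuousLinearEquiv.refl ℝ (Fin n → ℝ)).prodCongr
    (ContinuousLinearEquiv.smulLeft (Units.mk0 L hL.ne'))
  have hscale : f ∘ scale =ᶠ[𝓝 p] L ^ k • f := by
    filter_upwards [(isOpen_omegaSet hU).mem_nhds hp] with q hq using hf L hL q hq
  calc fderiv ℝ f (p.1, L • p.2) (v.1, L • v.2)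
      = fderiv ℝ (f ∘ scale) p v := by rw [scale.comp_right_fderiv]; rfl
    _ = L ^ k * fderiv ℝ f p v := by rw [hscale.fderiv_eq, fderiv_const_smul_field]; simp

protected theorem PosHomog.pdx (hU : IsOpen U) (hf : PosHomog U k f) (i : Fin n) :
    PosHomog U k (pdx f i) :=
  fun L hL p hp => by simpa [pdx] using hf.fderiv_apply hU hL hp (Pi.single i 1, 0)

protected theorem PosHomog.pdy (hU : IsOpen U) (hf : PosHomog U k f) (i : Fin n) :
    PosHomog U (k - 1) (pdy f i) := by
  intro L hL p hp
  have hsmul : ((0, L • Pi.single i 1) : Pt n) = L • (0, Pi.single i 1) := by simp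
  have hscale : L * pdy f i (p.1, L • p.2) = L ^ k * pdy f i p := by
    simpa only [pdy, hsmul, map_smul, smul_eq_mul] using hf.fderiv_apply hU hL hp (0, Pi.single i 1)
  rw [zpow_sub_one₀ hL.ne', mul_right_comm, ← hscale, mul_comm L, mul_inv_cancel_right₀ hL.ne']

theorem PosHomog.sum_snd_mul_pdy (hf : PosHomog U k f) {p : Pt n} (hp : p ∈ OmegaSet U)
    (hfp : DifferentiableAt ℝ f p) : ∑ j, p.2 j * pdy f j p = k * f p := by
  have hray : HasDerivAt (fun L : ℝ => ((p.1, L • p.2) : Pt n)) (0, p.2) 1 := by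
    simpa using (hasDerivAt_const (1 : ℝ) p.1).prodMk ((hasDerivAt_id (1 : ℝ)).smul_const p.2)
  have hf_ray : HasDerivAt (fun L : ℝ => f (p.1, L • p.2)) (fderiv ℝ f p (0, p.2)) 1 :=
    HasFDerivAt.comp_hasDerivAt 1 (by simpa using hfp.hasFDerivAt) hray
  have hpow : HasDerivAt (fun L : ℝ => L ^ k * f p) (k * f p) 1 := by
    simpa using (hasDerivAt_zpow k (1 : ℝ) (by simp)).mul_const (f p)
  have hhomog : (fun L : ℝ => f (p.1, L • p.2)) =ᶠ[𝓝 1] fun L => L ^ k * f p := by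
    filter_upwards [lt_mem_nhds one_pos] with L hL using hf L hL p hp
  rw [← fderiv_zero_prod_apply]
  exact hf_ray.unique (hpow.congr_of_eventuallyEq hhomog)

end Homogeneity

/-! ### Homogeneous one-forms with skew-symmetric fibre derivative -/

section Skew

variable {n : ℕ} {U : Set (Fin n → ℝ)} {k : ℤ} {T : Fin n → Pt n → ℝ}

theorem sum_snd_mul_eq_zero_of_pdy_skew (hk : k ≠ 0) (hhom : ∀ i, PosHomog U k (T i)) {p : Pt n}
    (hp : p ∈ OmegaSet U) (hT : ∀ i, DifferentiableAt ℝ (T i) p)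
    (hskew : ∀ i j, pdy (T i) j p + pdy (T j) i p = 0) : ∑ i, p.2 i * T i p = 0 := by
  have heuler : ∑ i, ∑ j, p.2 i * (p.2 j * pdy (T i) j p) = k * ∑ i, p.2 i * T i p := by
    simp_rw [← Finset.mul_sum, (hhom _).sum_snd_mul_pdy hp (hT _), Finset.mul_sum]
    exact Finset.sum_congr rfl fun i _ => by ring
  have hneg : ∑ i, ∑ j, p.2 i * (p.2 j * pdy (T i) j p)
      = -∑ i, ∑ j, p.2 i * (p.2 j * pdy (T i) j p) := by
    conv_lhs => rw [Finset.sum_comm]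
    simp_rw [← Finset.sum_neg_distrib]
    exact Finset.sum_congr rfl fun i _ => Finset.sum_congr rfl fun j _ => by
      linear_combination p.2 i * p.2 j * hskew i j
  have hmul : (k : ℝ) * ∑ i, p.2 i * T i p = 0 := heuler ▸ self_eq_neg.mp hneg
  exact (mul_eq_zero.mp hmul).resolve_left (Int.cast_ne_zero.mpr hk)

theorem eq_zero_of_pdy_skew (hU : IsOpen U) (hk₀ : k ≠ 0) (hk₁ : k ≠ 1)
    (hhom : ∀ i, PosHomog U k (T i)) (hT : ∀ i, ∀ p ∈ OmegaSet U, DifferentiableAt ℝ (T i) p)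
    (hskew : ∀ i j, ∀ p ∈ OmegaSet U, pdy (T i) j p + pdy (T j) i p = 0)
    (i : Fin n) {p : Pt n} (hp : p ∈ OmegaSet U) : T i p = 0 := by
  have hcontract : (fun q : Pt n => ∑ j, q.2 j * T j q) =ᶠ[𝓝 p] fun _ => 0 := by
    filter_upwards [(isOpen_omegaSet hU).mem_nhds hp] with q hq
    exact sum_snd_mul_eq_zero_of_pdy_skew hk₀ hhom hq (fun j => hT j q hq)
      fun i j => hskew i j q hq
  have hderiv : T i p + ∑ j, p.2 j * pdy (T j) i p = 0 := by
    rw [← pdy_sum_snd_mul fun j => hT j p hp, pdy_congr hcontract]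
    simp [pdy]
  have heuler : ∑ j, p.2 j * pdy (T j) i p = -(k * T i p) := by
    rw [← (hhom i).sum_snd_mul_pdy hp (hT i p hp), ← Finset.sum_neg_distrib]
    exact Finset.sum_congr rfl fun j _ => by linear_combination p.2 j * hskew i j p hp
  have hmul : (1 - (k : ℝ)) * T i p = 0 := by linear_combination hderiv - heuler
  exact (mul_eq_zero.mp hmul).resolve_left (sub_ne_zero.mpr (mod_cast hk₁.symm))

end Skew

/-! ### The spray derivative and the Euler–Lagrange form -/

section Spray

variable {n : ℕ} {U : Set (Fin n → ℝ)} {G : Fin n → Pt n → ℝ} {f E : Pt n → ℝ} {k : ℤ}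
  {p : Pt n}

theorem Sop_congr {g : Pt n → ℝ} (hfg : f =ᶠ[𝓝 p] g) : Sop G f p = Sop G g p := by
  simp only [Sop, pdx, pdy, hfg.fderiv_eq]

theorem Sop_const_mul (hf : DifferentiableAt ℝ f p) (c : ℝ) :
    Sop G (fun q => c * f q) p = c * Sop G f p := by
  simp only [Sop, pdx_const_mul hf, pdy_const_mul hf, Finset.mul_sum]
  exact Finset.sum_congr rfl fun k _ => by ring

theorem nablaT_const_mul {T : Fin n → Fin n → Pt n → ℝ} {i j : Fin n}
    (hT : DifferentiableAt ℝ (T i j) p) (c : ℝ) :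
    nablaT G (fun i j q => c * T i j q) i j p = c * nablaT G T i j p := by
  simp only [nablaT, Sop_const_mul hT, mul_sub, Finset.mul_sum]
  exact congrArg _ (Finset.sum_congr rfl fun k _ => by ring)

theorem differentiableAt_Sop (hG : ∀ k, DifferentiableAt ℝ (G k) p) (hf : ContDiffAt ℝ 2 f p) :
    DifferentiableAt ℝ (Sop G f) p :=
  DifferentiableAt.fun_sum fun k _ =>
    ((differentiableAt_snd_apply k).fun_mul (differentiableAt_pdx hf k)).fun_sub
      (((hG k).const_mul 2).fun_mul (differentiableAt_pdy hf k))

theorem differentiableAt_EL (hG : ∀ k, DifferentiableAt ℝ (G k) p) (hE : ContDiffAt ℝ 3 E p)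
    (i : Fin n) : DifferentiableAt ℝ (EL G E i) p :=
  (differentiableAt_Sop hG (contDiffAt_pdy hE i)).fun_sub
    (differentiableAt_pdx (hE.of_le (by norm_num)) i)

protected theorem PosHomog.Sop (hU : IsOpen U) (hG : ∀ i, PosHomog U 2 (G i))
    (hf : PosHomog U k f) : PosHomog U (k + 1) (Sop G f) :=
  PosHomog.sum fun i _ => ((posHomog_snd_apply i).mul (hf.pdx hU i) (by ring)).sub
    (((hG i).const_mul 2).mul (hf.pdy hU i) (by ring))

protected theorem PosHomog.EL (hU : IsOpen U) (hG : ∀ i, PosHomog U 2 (G i)) (hE : PosHomog U k E)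
    (i : Fin n) : PosHomog U k (EL G E i) := by
  have hSop := (hE.pdy hU i).Sop hU hG
  rw [sub_add_cancel] at hSop
  exact hSop.sub (hE.pdx hU i)

theorem pdy_Sop (hG : ∀ k, DifferentiableAt ℝ (G k) p) (hf : ContDiffAt ℝ 2 f p) (j : Fin n) :
    pdy (Sop G f) j p = Sop G (pdy f j) p + pdx f j p - 2 * ∑ k, Ncoef G k j p * pdy f k p := by
  have hx k := differentiableAt_pdx hf k
  have hy k := differentiableAt_pdy hf k
  have hGk k := (hG k).const_mul 2
  have hyx k := (differentiableAt_snd_apply (p := p) k).fun_mul (hx k)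
  have hGy k := (hGk k).fun_mul (hy k)
  have hterm k : pdy (fun q => q.2 k * pdx f k q - 2 * G k q * pdy f k q) j p
      = (p.2 k * pdx (pdy f j) k p - 2 * G k p * pdy (pdy f j) k p)
        + (if k = j then 1 else 0) * pdx f k p - 2 * (Ncoef G k j p * pdy f k p) := by
    have hcomm : pdy (pdy f k) j p = pdy (pdy f j) k p := pdyy_comm hf j k
    rw [pdy_sub (hyx k) (hGy k), pdy_mul (differentiableAt_snd_apply k) (hx k),
      pdy_mul (hGk k) (hy k), pdy_const_mul (hG k), pdy_snd_apply, pdy_pdx_comm hf, hcomm, Ncoef]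
    ring
  calc pdy (Sop G f) j p
      = ∑ k, pdy (fun q => q.2 k * pdx f k q - 2 * G k q * pdy f k q) j p :=
        pdy_sum (fun k _ => (hyx k).fun_sub (hGy k)) j
    _ = Sop G (pdy f j) p + pdx f j p - 2 * ∑ k, Ncoef G k j p * pdy f k p := by
        simp [hterm, Sop, Finset.sum_sub_distrib, Finset.sum_add_distrib, Finset.mul_sum]

theorem pdy_EL (hG : ∀ k, DifferentiableAt ℝ (G k) p) (hE : ContDiffAt ℝ 3 E p) (i j : Fin n) :
    pdy (EL G E i) j p = Sop G (pdyy E j i) p - 2 * ∑ k, Ncoef G k j p * pdyy E k i p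
      + (pdx (pdy E i) j p - pdx (pdy E j) i p) := by
  have hE₂ : ContDiffAt ℝ 2 E p := hE.of_le (by norm_num)
  have hEi : ContDiffAt ℝ 2 (pdy E i) p := contDiffAt_pdy hE i
  calc pdy (EL G E i) j p
      = pdy (Sop G (pdy E i)) j p - pdy (pdx E i) j p :=
        pdy_sub (differentiableAt_Sop hG hEi) (differentiableAt_pdx hE₂ i) j
    _ = _ := by
        rw [pdy_Sop hG hEi, pdy_pdx_comm hE₂]
        simp only [pdyy]
        ring

theorem pdy_EL_add_pdy_EL (hG : ∀ k, DifferentiableAt ℝ (G k) p) (hE : ContDiffAt ℝ 3 E p)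
    (i j : Fin n) :
    pdy (EL G E i) j p + pdy (EL G E j) i p = 2 * nablaT G (pdyy E) i j p := by
  have hE₂ : ContDiffAt ℝ 2 E p := hE.of_le (by norm_num)
  have hSop : Sop G (pdyy E j i) p = Sop G (pdyy E i j) p := Sop_congr <| by
    filter_upwards [hE₂.eventually (by simp)] with q hq using pdyy_comm hq j i
  rw [pdy_EL hG hE, pdy_EL hG hE, hSop, nablaT, Finset.sum_add_distrib]
  simp only [pdyy_comm hE₂ _ i]
  ring

end Spray

/-! ### The Levi-Civita equations -/

/-- The metric tensor `½ ∂²E/∂y^i∂y^j` of an arbitrary energy function `E`. The metric tensor of a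
Finsler function `F` is that of `E = F²`. -/
def energyMetric {n : ℕ} (E : Pt n → ℝ) (i j : Fin n) (p : Pt n) : ℝ :=
  (1 / 2) * pdyy E i j p

/-- The components of the one-form `δ_S E − 2P d_J E`, which measures the failure of the
Euler–Lagrange equations with force term `2P d_J E`. -/
def projectiveDefect {n : ℕ} (G : Fin n → Pt n → ℝ) (E P : Pt n → ℝ) (i : Fin n) (p : Pt n) :
    ℝ :=
  EL G E i p - 2 * (P p * pdy E i p)

section LeviCivita

variable {n : ℕ} {U : Set (Fin n → ℝ)} {G : Fin n → Pt n → ℝ} {E P : Pt n → ℝ} {p : Pt n}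

theorem projectiveDefect_eq_zero_iff {i : Fin n} :
    projectiveDefect G E P i p = 0 ↔ EL G E i p = 2 * P p * pdy E i p := by
  rw [projectiveDefect, sub_eq_zero, mul_assoc]

theorem energyMetric_comm (hE : ContDiffAt ℝ 2 E p) (i j : Fin n) :
    energyMetric E i j p = energyMetric E j i p := by
  rw [energyMetric, energyMetric, pdyy_comm hE]

theorem sum_energyMetric_mul_snd (hU : IsOpen U) (hhom : PosHomog U 2 E) (hp : p ∈ OmegaSet U)
    (hE : ContDiffAt ℝ 2 E p) (j : Fin n) :
    ∑ k, energyMetric E k j p * p.2 k = 1 / 2 * pdy E j p := by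
  have heuler : ∑ k, p.2 k * pdyy E k j p = pdy E j p := by
    simpa [pdyy] using (hhom.pdy hU j).sum_snd_mul_pdy hp (differentiableAt_pdy hE j)
  rw [← heuler, Finset.mul_sum]
  exact Finset.sum_congr rfl fun k _ => by rw [energyMetric]; ring

theorem differentiableAt_projectiveDefect (hG : ∀ k, DifferentiableAt ℝ (G k) p)
    (hE : ContDiffAt ℝ 3 E p) (hP : DifferentiableAt ℝ P p) (i : Fin n) :
    DifferentiableAt ℝ (projectiveDefect G E P i) p :=
  (differentiableAt_EL hG hE i).fun_sub
    ((hP.fun_mul (differentiableAt_pdy (hE.of_le (by norm_num)) i)).const_mul 2)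

protected theorem PosHomog.projectiveDefect {k : ℤ} (hU : IsOpen U) (hG : ∀ i, PosHomog U 2 (G i))
    (hE : PosHomog U k E) (hP : PosHomog U 1 P) (i : Fin n) :
    PosHomog U k (projectiveDefect G E P i) :=
  (hE.EL hU hG i).sub ((hP.mul (hE.pdy hU i) (by ring)).const_mul 2)

theorem pdy_projectiveDefect (hG : ∀ k, DifferentiableAt ℝ (G k) p) (hE : ContDiffAt ℝ 3 E p)
    (hP : DifferentiableAt ℝ P p) (i j : Fin n) :
    pdy (projectiveDefect G E P i) j p
      = pdy (EL G E i) j p - 2 * (P p * pdyy E j i p + pdy P j p * pdy E i p) := by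
  have hEi := differentiableAt_pdy (hE.of_le (by norm_num)) i
  calc pdy (projectiveDefect G E P i) j p
      = pdy (EL G E i) j p - pdy (fun q => 2 * (P q * pdy E i q)) j p :=
        pdy_sub (differentiableAt_EL hG hE i) ((hP.fun_mul hEi).const_mul 2) j
    _ = _ := by rw [pdy_const_mul (hP.fun_mul hEi), pdy_mul hP hEi, pdyy]

theorem pdy_projectiveDefect_add_pdy_projectiveDefect (hU : IsOpen U) (hhom : PosHomog U 2 E)
    (hp : p ∈ OmegaSet U) (hG : ∀ k, DifferentiableAt ℝ (G k) p) (hE : ContDiffAt ℝ 3 E p)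
    (hP : DifferentiableAt ℝ P p) (i j : Fin n) :
    pdy (projectiveDefect G E P i) j p + pdy (projectiveDefect G E P j) i p
      = 4 * (nablaT G (energyMetric E) i j p
          - (2 * P p * energyMetric E i j p
            + pdy P i p * ∑ k, energyMetric E k j p * p.2 k
            + pdy P j p * ∑ k, energyMetric E i k p * p.2 k)) := by
  have hE₂ : ContDiffAt ℝ 2 E p := hE.of_le (by norm_num)
  have hnabla : nablaT G (energyMetric E) i j p = 1 / 2 * nablaT G (pdyy E) i j p :=
    nablaT_const_mul (differentiableAt_pdy (contDiffAt_pdy hE j) i) _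
  simp only [energyMetric_comm hE₂ i, sum_energyMetric_mul_snd hU hhom hp hE₂]
  rw [pdy_projectiveDefect hG hE hP, pdy_projectiveDefect hG hE hP, hnabla, energyMetric,
    pdyy_comm hE₂ i j]
  linear_combination pdy_EL_add_pdy_EL hG hE i j

theorem statement6_general (hU : IsOpen U) (hG : ∀ i, DifferentiableOn ℝ (G i) (OmegaSet U))
    (hGh : ∀ i, PosHomog U 2 (G i)) (hE : ContDiffOn ℝ 3 E (OmegaSet U)) (hEh : PosHomog U 2 E)
    (hP : DifferentiableOn ℝ P (OmegaSet U)) (hPh : PosHomog U 1 P) :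
    (∀ i, ∀ p ∈ OmegaSet U, EL G E i p = 2 * P p * pdy E i p) ↔
      (∀ i j, ∀ p ∈ OmegaSet U,
        nablaT G (energyMetric E) i j p
          = 2 * P p * energyMetric E i j p
            + pdy P i p * ∑ k, energyMetric E k j p * p.2 k
            + pdy P j p * ∑ k, energyMetric E i k p * p.2 k) := by
  have hnhds : ∀ p ∈ OmegaSet U, OmegaSet U ∈ 𝓝 p := fun p => (isOpen_omegaSet hU).mem_nhds
  have hGp : ∀ p ∈ OmegaSet U, ∀ k, DifferentiableAt ℝ (G k) p :=
    fun p hp k => (hG k).differentiableAt (hnhds p hp)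
  have hEp : ∀ p ∈ OmegaSet U, ContDiffAt ℝ 3 E p := fun p hp => hE.contDiffAt (hnhds p hp)
  have hPp : ∀ p ∈ OmegaSet U, DifferentiableAt ℝ P p :=
    fun p hp => hP.differentiableAt (hnhds p hp)
  have hsymm i j p hp := pdy_projectiveDefect_add_pdy_projectiveDefect hU hEh hp (hGp p hp)
    (hEp p hp) (hPp p hp) i j
  simp only [← projectiveDefect_eq_zero_iff]
  constructor
  · intro hzero i j p hp
    have hpdy : ∀ i j, pdy (projectiveDefect G E P i) j p = 0 := fun i j => by
      rw [pdy_congr (g := fun _ => 0) (eventually_of_mem (hnhds p hp) (hzero i))]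
      simp [pdy]
    linear_combination (hpdy i j + hpdy j i - hsymm i j p hp) / 4
  · intro hLC i p hp
    refine eq_zero_of_pdy_skew hU (k := 2) (by norm_num) (by norm_num)
      (fun i => hEh.projectiveDefect hU hGh hPh i)
      (fun i q hq => differentiableAt_projectiveDefect (hGp q hq) (hEp q hq) (hPp q hq) i) ?_ i hp
    intro i j q hq
    rw [hsymm i j q hq, hLC i j q hq, sub_self, mul_zero]

end LeviCivita

/-- for a fixed 1-homogeneous `P`, `δ_S F̃² = 2P d_J F̃²` holds on `Ω`
iff the Levi-Civita equations hold on `Ω`. -/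
theorem statement6 {n : ℕ} (hn : 1 ≤ n) (U : Set (Fin n → ℝ)) (hU : IsOpen U)
    (G : Fin n → Pt n → ℝ) (hG : IsSpray U G)
    (Ft : Pt n → ℝ) (hFt : IsFinsler U Ft)
    (P : Pt n → ℝ) (hP : ContDiffOn ℝ (⊤ : ℕ∞) P (OmegaSet U)) (hPh : PosHomog U 1 P) :
    (∀ i, ∀ p ∈ OmegaSet U,
        EL G (fun q => Ft q ^ 2) i p = 2 * P p * pdy (fun q => Ft q ^ 2) i p) ↔
      (∀ i j, ∀ p ∈ OmegaSet U,
        nablaT G (metricTensor Ft) i j p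
          = 2 * P p * metricTensor Ft i j p
            + pdy P i p * ∑ k, metricTensor Ft k j p * p.2 k
            + pdy P j p * ∑ k, metricTensor Ft i k p * p.2 k) := by
  obtain ⟨hFs, -, hFh, -⟩ := hFt
  exact statement6_general hU (fun i => (hG i).1.differentiableOn (by simp)) (fun i => (hG i).2)
    ((hFs.pow 2).of_le (WithTop.coe_le_coe.2 le_top)) hFh.sq (hP.differentiableOn (by simp)) hPh
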